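/- Let u be a monotone traveling wave solution of the unbalanced Allen-Cahn equation in the plane connecting −1 to 1, and assume u and its derivatives up to third order are bounded. Then the function h(x) := ∫_ℝ ∂u/∂x(x,y) · ∂u/∂y(x,y) dy is well defined and bounded on ℝ, is differentiable, and satisfies h'(x) = F(1) − c ∫_ℝ (∂u/∂y(x,y))² dy for every x ∈ ℝ; consequently ∫_a^b ∫_ℝ (∂u/∂y)² dy dx = (h(a) − h(b))/c + F(1)(b − a)/c for all a < b. -/

import Mathlib

open Real Filter MeasureTheory Metric

noncomputable def pdx (u : ℝ → ℝ → ℝ) (x y : ℝ) : ℝ := deriv (fun t => u t y) x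

noncomputable def pdy (u : ℝ → ℝ → ℝ) (x y : ℝ) : ℝ := deriv (fun t => u x t) y

noncomputable def pdxx (u : ℝ → ℝ → ℝ) (x y : ℝ) : ℝ := deriv (fun t => pdx u t y) x

noncomputable def pdyy (u : ℝ → ℝ → ℝ) (x y : ℝ) : ℝ := deriv (fun t => pdy u x t) y

/-- `F` is an unbalanced double-well potential. -/
def UnbalancedDoubleWell (F : ℝ → ℝ) : Prop :=
  ContDiff ℝ 3 F ∧ deriv F (-1) = 0 ∧ deriv F 1 = 0 ∧
  0 < deriv (deriv F) (-1) ∧ 0 < deriv (deriv F) 1 ∧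
  (∀ s ∈ Set.Ioo (-1 : ℝ) 0, 0 < deriv F s) ∧
  (∀ s ∈ Set.Ioo (0 : ℝ) 1, deriv F s < 0) ∧
  F (-1) = 0 ∧ 0 < F 1

/-- `u` is a `C³` solution of `Δu + c uᵧ = F'(u)` on `ℝ²` with `|u| ≤ 1`
which is monotone in `y`. -/
def IsSolution (F : ℝ → ℝ) (c : ℝ) (u : ℝ → ℝ → ℝ) : Prop :=
  ContDiff ℝ 3 (fun p : ℝ × ℝ => u p.1 p.2) ∧
  (∀ x y : ℝ, pdxx u x y + pdyy u x y + c * pdy u x y = deriv F (u x y)) ∧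
  (∀ x y : ℝ, |u x y| ≤ 1) ∧
  (∀ x y : ℝ, 0 < pdy u x y)

/-- A monotone traveling wave solution connecting `-1` to `1`. -/
def IsTravelingWave (F : ℝ → ℝ) (c : ℝ) (u : ℝ → ℝ → ℝ) : Prop :=
  IsSolution F c u ∧
  (∀ x : ℝ, Tendsto (fun y => u x y) atTop (nhds 1)) ∧
  (∀ x : ℝ, Tendsto (fun y => u x y) atBot (nhds (-1)))

/-! ### Partial derivatives of functions of two real variables -/

theorem hasDerivAt_fst_fderiv {v : ℝ → ℝ → ℝ} (hv : ContDiff ℝ 1 (fun p : ℝ × ℝ => v p.1 p.2))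
    (x y : ℝ) :
    HasDerivAt (fun t => v t y) (fderiv ℝ (fun p : ℝ × ℝ => v p.1 p.2) (x, y) (1, 0)) x :=
  (hv.differentiable one_ne_zero (x, y)).hasFDerivAt.comp_hasDerivAt
    (f := fun t : ℝ => (t, y)) x ((hasDerivAt_id x).prodMk (hasDerivAt_const x y))

theorem hasDerivAt_snd_fderiv {v : ℝ → ℝ → ℝ} (hv : ContDiff ℝ 1 (fun p : ℝ × ℝ => v p.1 p.2))
    (x y : ℝ) :
    HasDerivAt (fun t => v x t) (fderiv ℝ (fun p : ℝ × ℝ => v p.1 p.2) (x, y) (0, 1)) y :=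
  (hv.differentiable one_ne_zero (x, y)).hasFDerivAt.comp_hasDerivAt
    (f := fun t : ℝ => (x, t)) y ((hasDerivAt_const y x).prodMk (hasDerivAt_id y))

theorem hasDerivAt_pdx {v : ℝ → ℝ → ℝ} (hv : ContDiff ℝ 1 (fun p : ℝ × ℝ => v p.1 p.2))
    (x y : ℝ) : HasDerivAt (fun t => v t y) (pdx v x y) x :=
  (hasDerivAt_fst_fderiv hv x y).differentiableAt.hasDerivAt

theorem hasDerivAt_pdy {v : ℝ → ℝ → ℝ} (hv : ContDiff ℝ 1 (fun p : ℝ × ℝ => v p.1 p.2))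
    (x y : ℝ) : HasDerivAt (fun t => v x t) (pdy v x y) y :=
  (hasDerivAt_snd_fderiv hv x y).differentiableAt.hasDerivAt

theorem uncurry_pdx {v : ℝ → ℝ → ℝ} (hv : ContDiff ℝ 1 (fun p : ℝ × ℝ => v p.1 p.2)) :
    (fun p : ℝ × ℝ => pdx v p.1 p.2) =
      fun p => fderiv ℝ (fun p : ℝ × ℝ => v p.1 p.2) p (1, 0) :=
  funext fun p => (hasDerivAt_fst_fderiv hv p.1 p.2).deriv

theorem uncurry_pdy {v : ℝ → ℝ → ℝ} (hv : ContDiff ℝ 1 (fun p : ℝ × ℝ => v p.1 p.2)) :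
    (fun p : ℝ × ℝ => pdy v p.1 p.2) =
      fun p => fderiv ℝ (fun p : ℝ × ℝ => v p.1 p.2) p (0, 1) :=
  funext fun p => (hasDerivAt_snd_fderiv hv p.1 p.2).deriv

theorem contDiff_pdx {v : ℝ → ℝ → ℝ} {n : ℕ}
    (hv : ContDiff ℝ (n + 1) (fun p : ℝ × ℝ => v p.1 p.2)) :
    ContDiff ℝ n (fun p : ℝ × ℝ => pdx v p.1 p.2) := by
  rw [uncurry_pdx (hv.of_le (by simp))]
  exact (hv.fderiv_right le_rfl).clm_apply contDiff_const

theorem contDiff_pdy {v : ℝ → ℝ → ℝ} {n : ℕ}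
    (hv : ContDiff ℝ (n + 1) (fun p : ℝ × ℝ => v p.1 p.2)) :
    ContDiff ℝ n (fun p : ℝ × ℝ => pdy v p.1 p.2) := by
  rw [uncurry_pdy (hv.of_le (by simp))]
  exact (hv.fderiv_right le_rfl).clm_apply contDiff_const

theorem fderiv_fderiv_apply {f : ℝ × ℝ → ℝ} (hf : ContDiff ℝ 2 f) (p e d : ℝ × ℝ) :
    fderiv ℝ (fun q => fderiv ℝ f q e) p d = fderiv ℝ (fderiv ℝ f) p d e := by
  have h : DifferentiableAt ℝ (fderiv ℝ f) p :=
    (hf.fderiv_right (m := 1) (by norm_num)).differentiable one_ne_zero p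
  rw [fderiv_clm_apply h (differentiableAt_const e)]
  simp

/-- Mixed partial derivatives of a `C²` function commute. -/
theorem pdx_pdy_comm {v : ℝ → ℝ → ℝ} (hv : ContDiff ℝ 2 (fun p : ℝ × ℝ => v p.1 p.2))
    (x y : ℝ) : pdx (pdy v) x y = pdy (pdx v) x y := by
  have h1 : ContDiff ℝ 1 (fun p : ℝ × ℝ => v p.1 p.2) := hv.of_le (by norm_num)
  have hx : ContDiff ℝ 1 (fun p : ℝ × ℝ => pdx v p.1 p.2) := contDiff_pdx (n := 1) hv
  have hy : ContDiff ℝ 1 (fun p : ℝ × ℝ => pdy v p.1 p.2) := contDiff_pdy (n := 1) hv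
  have e1 := congrFun (uncurry_pdx hy) (x, y)
  have e2 := congrFun (uncurry_pdy hx) (x, y)
  simp only [uncurry_pdy h1, uncurry_pdx h1, fderiv_fderiv_apply hv] at e1 e2
  rw [e1, e2]
  exact (hv.contDiffAt.isSymmSndFDerivAt (by simp)) _ _

theorem exists_bound_iteratedFDeriv_fderiv_apply {f : ℝ × ℝ → ℝ} {n : ℕ}
    (hf : ContDiff ℝ (n + 1) f) (e : ℝ × ℝ)
    (hb : ∃ M : ℝ, ∀ p, ‖iteratedFDeriv ℝ (n + 1) f p‖ ≤ M) :
    ∃ M : ℝ, ∀ p, ‖iteratedFDeriv ℝ n (fun q => fderiv ℝ f q e) p‖ ≤ M := by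
  obtain ⟨M, hM⟩ := hb
  refine ⟨‖ContinuousLinearMap.apply ℝ ℝ e‖ * M, fun p => ?_⟩
  have hd : ContDiff ℝ n (fderiv ℝ f) := hf.fderiv_right le_rfl
  refine ((ContinuousLinearMap.apply ℝ ℝ e).norm_iteratedFDeriv_comp_left
    (f := fderiv ℝ f) (x := p) hd.contDiffAt le_rfl).trans ?_
  rw [norm_iteratedFDeriv_fderiv]
  gcongr
  exact hM p

theorem exists_bound_pdx {v : ℝ → ℝ → ℝ} {n : ℕ}
    (hv : ContDiff ℝ (n + 1) (fun p : ℝ × ℝ => v p.1 p.2))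
    (hb : ∃ M : ℝ, ∀ p, ‖iteratedFDeriv ℝ (n + 1) (fun p : ℝ × ℝ => v p.1 p.2) p‖ ≤ M) :
    ∃ M : ℝ, ∀ p, ‖iteratedFDeriv ℝ n (fun p : ℝ × ℝ => pdx v p.1 p.2) p‖ ≤ M := by
  rw [uncurry_pdx (hv.of_le (by simp))]
  exact exists_bound_iteratedFDeriv_fderiv_apply hv _ hb

theorem exists_bound_pdy {v : ℝ → ℝ → ℝ} {n : ℕ}
    (hv : ContDiff ℝ (n + 1) (fun p : ℝ × ℝ => v p.1 p.2))
    (hb : ∃ M : ℝ, ∀ p, ‖iteratedFDeriv ℝ (n + 1) (fun p : ℝ × ℝ => v p.1 p.2) p‖ ≤ M) :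
    ∃ M : ℝ, ∀ p, ‖iteratedFDeriv ℝ n (fun p : ℝ × ℝ => pdy v p.1 p.2) p‖ ≤ M := by
  rw [uncurry_pdy (hv.of_le (by simp))]
  exact exists_bound_iteratedFDeriv_fderiv_apply hv _ hb

theorem exists_abs_le_of_bound_iteratedFDeriv_zero {v : ℝ → ℝ → ℝ}
    (hb : ∃ M : ℝ, ∀ p, ‖iteratedFDeriv ℝ 0 (fun p : ℝ × ℝ => v p.1 p.2) p‖ ≤ M) :
    ∃ M : ℝ, ∀ x y, |v x y| ≤ M := by
  obtain ⟨M, hM⟩ := hb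
  exact ⟨M, fun x y => by simpa using hM (x, y)⟩

/-! ### Limits and integrals -/

/-- If the increments of a family of functions at `a` tend to zero along `l` and the second
derivatives are uniformly bounded, then the first derivatives at `a` tend to zero along `l`. -/
theorem tendsto_deriv_zero_of_tendsto_increment {ι : Type*} {l : Filter ι}
    {f f' f'' : ι → ℝ → ℝ} {K : ℝ} {a : ℝ}
    (hf : ∀ i t, HasDerivAt (f i) (f' i t) t) (hf' : ∀ i t, HasDerivAt (f' i) (f'' i t) t)
    (hK : ∀ i t, |f'' i t| ≤ K)
    (hl : ∀ δ > 0, Tendsto (fun i => f i (a + δ) - f i a) l (nhds 0)) :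
    Tendsto (fun i => f' i a) l (nhds 0) := by
  rw [Metric.tendsto_nhds]
  intro ε hε
  obtain ⟨δ, hδ, hδK⟩ : ∃ δ > 0, |K| * δ < ε / 2 := by
    refine ⟨ε / (2 * (|K| + 1)), by positivity, ?_⟩
    have : |K| * (ε / (2 * (|K| + 1))) = (ε / 2) * (|K| / (|K| + 1)) := by field_simp
    rw [this]
    have h2 : |K| / (|K| + 1) < 1 := by
      rw [div_lt_one (by positivity)]
      linarith
    nlinarith
  filter_upwards [(Metric.tendsto_nhds.1 (hl δ hδ)) (δ * (ε / 2)) (by positivity)] with i hi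
  rw [Real.dist_eq, sub_zero] at hi ⊢
  obtain ⟨ξ, hξ, hs⟩ := exists_hasDerivAt_eq_slope (f i) (f' i) (show a < a + δ by linarith)
    (fun t _ => (hf i t).continuousAt.continuousWithinAt) (fun t _ => hf i t)
  have hlip : |f' i ξ - f' i a| ≤ K * |ξ - a| :=
    Convex.norm_image_sub_le_of_norm_hasDerivWithin_le (s := Set.univ)
      (fun t _ => (hf' i t).hasDerivWithinAt) (fun t _ => hK i t) convex_univ
      (Set.mem_univ a) (Set.mem_univ ξ)
  have hξδ : |ξ - a| ≤ δ := by
    rw [abs_of_nonneg] <;> linarith [hξ.1, hξ.2]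
  have hlip' : |f' i ξ - f' i a| ≤ |K| * δ :=
    hlip.trans (mul_le_mul (le_abs_self K) hξδ (abs_nonneg _) (abs_nonneg _))
  have hξs : |f' i ξ| < ε / 2 := by
    rw [hs, add_sub_cancel_left, abs_div, abs_of_pos hδ, div_lt_iff₀ hδ]
    linarith
  have := abs_sub_abs_le_abs_sub (f' i a) (f' i ξ)
  rw [abs_sub_comm] at this
  linarith

/-- A nonnegative derivative of a function with finite limits at `±∞` is integrable. -/
theorem integrable_of_hasDerivAt_nonneg_of_tendsto {f f' : ℝ → ℝ} {m n : ℝ}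
    (hf : ∀ t, HasDerivAt f (f' t) t) (hcont : Continuous f') (hpos : ∀ t, 0 ≤ f' t)
    (hbot : Tendsto f atBot (nhds m)) (htop : Tendsto f atTop (nhds n)) : Integrable f' := by
  refine integrable_of_intervalIntegral_norm_tendsto (l := atTop) (a := fun R : ℝ => -R)
    (b := fun R => R) (n - m) (fun R => hcont.integrableOn_Ioc) tendsto_neg_atTop_atBot
    tendsto_id ?_
  refine (htop.sub (hbot.comp tendsto_neg_atTop_atBot)).congr fun R => ?_
  simp only [Real.norm_of_nonneg (hpos _)]
  exact (intervalIntegral.integral_eq_sub_of_hasDerivAt (fun t _ => hf t)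
    (hcont.intervalIntegrable _ _)).symm

/-- If `0 ≤ w ≤ K` and `w x` integrates to a value independent of `x`, then `x ↦ ∫ (w x)²` is continuous. -/
theorem continuous_integral_sq {w : ℝ → ℝ → ℝ} {K I : ℝ}
    (hw : Continuous (fun p : ℝ × ℝ => w p.1 p.2)) (hpos : ∀ x y, 0 ≤ w x y)
    (hK : ∀ x y, w x y ≤ K) (hint : ∀ x, Integrable (w x)) (hI : ∀ x, ∫ y, w x y = I) :
    Continuous (fun x => ∫ y, (w x y) ^ 2) := by
  have hwx : ∀ x, Continuous (w x) := fun x => hw.comp (by fun_prop : Continuous fun y => (x, y))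
  have hsqle : ∀ x y, (w x y) ^ 2 ≤ K * w x y := fun x y => by
    nlinarith [hpos x y, hK x y]
  have hsq : ∀ x, Integrable (fun y => (w x y) ^ 2) := fun x =>
    ((hint x).const_mul K).mono' ((hwx x).pow 2).aestronglyMeasurable
      (ae_of_all _ fun y => by rw [Real.norm_of_nonneg (sq_nonneg _)]; exact hsqle x y)
  have hT : ∀ R, Continuous fun x => ∫ y in -R..R, w x y := fun R =>
    intervalIntegral.continuous_parametric_intervalIntegral_of_continuous' hw _ _
  have hT2 : ∀ R, Continuous fun x => ∫ y in -R..R, (w x y) ^ 2 := fun R =>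
    intervalIntegral.continuous_parametric_intervalIntegral_of_continuous'
      (f := fun x y => (w x y) ^ 2) (Continuous.fun_pow hw 2) _ _
  have htail : ∀ R, 0 ≤ R → ∀ x,
      |(∫ y, (w x y) ^ 2) - ∫ y in -R..R, (w x y) ^ 2| ≤ K * (I - ∫ y in -R..R, w x y) := by
    intro R hR x
    have hle : -R ≤ R := by linarith
    rw [← hI x, intervalIntegral.integral_of_le hle, intervalIntegral.integral_of_le hle,
      ← setIntegral_univ, ← setIntegral_univ (f := w x),
      ← setIntegral_sdiff measurableSet_Ioc (hsq x).integrableOn (Set.subset_univ _),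
      ← setIntegral_sdiff measurableSet_Ioc (hint x).integrableOn (Set.subset_univ _),
      abs_of_nonneg (integral_nonneg fun y => sq_nonneg _), ← integral_const_mul]
    exact integral_mono (hsq x).integrableOn ((hint x).const_mul K).integrableOn (hsqle x)
  refine continuous_of_locally_uniform_approx_of_continuousAt fun x s hs => ?_
  obtain ⟨ε, hε, hεs⟩ := Metric.mem_uniformity_dist.1 hs
  have hlim : Tendsto (fun R : ℝ => K * (I - ∫ y in -R..R, w x y)) atTop (nhds 0) := by
    have := intervalIntegral_tendsto_integral (hint x) tendsto_neg_atTop_atBot tendsto_id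
    rw [hI x] at this
    simpa using (this.const_sub I).const_mul K
  obtain ⟨R, hRε, hR⟩ := ((hlim.eventually (gt_mem_nhds hε)).and (eventually_ge_atTop 0)).exists
  refine ⟨_, ((continuous_const.sub (hT R)).const_mul K).continuousAt.eventually (gt_mem_nhds hRε),
    fun x => ∫ y in -R..R, (w x y) ^ 2, (hT2 R).continuousAt, fun z hz => hεs ?_⟩
  rw [Real.dist_eq]
  exact (htail R hR z).trans_lt hz

/-- Differentiation under the integral sign over a bounded interval. -/
theorem hasDerivAt_intervalIntegral_of_bounded {f f' : ℝ → ℝ → ℝ} {B : ℝ}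
    (hf : Continuous (fun p : ℝ × ℝ => f p.1 p.2))
    (hf' : Continuous (fun p : ℝ × ℝ => f' p.1 p.2)) (hB : ∀ x y, |f' x y| ≤ B)
    (hd : ∀ x y, HasDerivAt (fun t => f t y) (f' x y) x) (a b x : ℝ) :
    HasDerivAt (fun t => ∫ y in a..b, f t y) (∫ y in a..b, f' x y) x := by
  have hfx : ∀ x, Continuous (f x) := fun x => hf.comp (by fun_prop : Continuous fun y => (x, y))
  have hfx' : Continuous (f' x) := hf'.comp (by fun_prop : Continuous fun y => (x, y))
  exact (intervalIntegral.hasDerivAt_integral_of_dominated_loc_of_deriv_le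
    (bound := fun _ => B) univ_mem (Eventually.of_forall fun t => (hfx t).aestronglyMeasurable)
    ((hfx x).intervalIntegrable _ _) hfx'.aestronglyMeasurable
    (ae_of_all _ fun y _ t _ => hB t y) intervalIntegrable_const
    (ae_of_all _ fun y _ t _ => hd t y)).2

/-- The flux function `h(x) = ∫ uₓ uᵧ dy` for the unbalanced equation is well
defined, bounded, differentiable with `h'(x) = F(1) - c ∫ uᵧ² dy`, and the
resulting integral identity holds (computation in the proof of Lemma 3.1). -/
theorem unbalanced_flux_function_identity
    (F : ℝ → ℝ) (hF : UnbalancedDoubleWell F) (c : ℝ) (hc : 0 < c)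
    (u : ℝ → ℝ → ℝ) (hu : IsTravelingWave F c u)
    (hbd : ∀ i : ℕ, i ≤ 3 → ∃ M : ℝ,
      ∀ p : ℝ × ℝ, ‖iteratedFDeriv ℝ i (fun q : ℝ × ℝ => u q.1 q.2) p‖ ≤ M) :
    (∀ x : ℝ, Integrable (fun y => pdx u x y * pdy u x y)) ∧
    (∃ C : ℝ, ∀ x : ℝ, |∫ y, pdx u x y * pdy u x y| ≤ C) ∧
    (∀ x : ℝ, HasDerivAt (fun x' => ∫ y, pdx u x' y * pdy u x' y)
      (F 1 - c * ∫ y, (pdy u x y) ^ 2) x) ∧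
    (∀ a b : ℝ, a < b →
      ∫ x in a..b, ∫ y, (pdy u x y) ^ 2 =
        ((∫ y, pdx u a y * pdy u a y) - ∫ y, pdx u b y * pdy u b y) / c +
          F 1 * (b - a) / c) := by
  obtain ⟨⟨hu3, hpde, hu1, hmono⟩, htop, hbot⟩ := hu
  obtain ⟨hF3, -, -, -, -, -, -, hFm, -⟩ := hF
  have hu1' : ContDiff ℝ 1 (fun p : ℝ × ℝ => u p.1 p.2) := hu3.of_le (by norm_num)
  have hu2' : ContDiff ℝ 2 (fun p : ℝ × ℝ => u p.1 p.2) := hu3.of_le (by norm_num)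
  have hux1 : ContDiff ℝ 1 (fun p : ℝ × ℝ => pdx u p.1 p.2) := contDiff_pdx (n := 1) hu2'
  have huy1 : ContDiff ℝ 1 (fun p : ℝ × ℝ => pdy u p.1 p.2) := contDiff_pdy (n := 1) hu2'
  have huxx : Continuous (fun p : ℝ × ℝ => pdx (pdx u) p.1 p.2) :=
    (contDiff_pdx (n := 0) (by simpa using hux1)).continuous
  have huxy : Continuous (fun p : ℝ × ℝ => pdy (pdx u) p.1 p.2) :=
    (contDiff_pdy (n := 0) (by simpa using hux1)).continuous
  have hsec : ∀ {f : ℝ → ℝ → ℝ}, Continuous (fun p : ℝ × ℝ => f p.1 p.2) →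
      ∀ x, Continuous (f x) :=
    fun hf x => hf.comp (by fun_prop : Continuous fun y => (x, y))
  obtain ⟨A, hA⟩ : ∃ M : ℝ, ∀ x y, |pdx u x y| ≤ M :=
    exists_abs_le_of_bound_iteratedFDeriv_zero
      (exists_bound_pdx (n := 0) (by simpa using hu1') (hbd 1 (by norm_num)))
  obtain ⟨B, hB⟩ : ∃ M : ℝ, ∀ x y, |pdy u x y| ≤ M :=
    exists_abs_le_of_bound_iteratedFDeriv_zero
      (exists_bound_pdy (n := 0) (by simpa using hu1') (hbd 1 (by norm_num)))
  have hbx := exists_bound_pdx (n := 1) hu2' (hbd 2 (by norm_num))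
  have hby := exists_bound_pdy (n := 1) hu2' (hbd 2 (by norm_num))
  obtain ⟨Axx, hAxx⟩ : ∃ M : ℝ, ∀ x y, |pdx (pdx u) x y| ≤ M :=
    exists_abs_le_of_bound_iteratedFDeriv_zero
      (exists_bound_pdx (n := 0) (by simpa using hux1) hbx)
  obtain ⟨Axy, hAxy⟩ : ∃ M : ℝ, ∀ x y, |pdy (pdx u) x y| ≤ M :=
    exists_abs_le_of_bound_iteratedFDeriv_zero
      (exists_bound_pdy (n := 0) (by simpa using hux1) hbx)
  obtain ⟨Ayy, hAyy⟩ : ∃ M : ℝ, ∀ x y, |pdy (pdy u) x y| ≤ M :=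
    exists_abs_le_of_bound_iteratedFDeriv_zero
      (exists_bound_pdy (n := 0) (by simpa using huy1) hby)
  have hB' : ∀ x y, pdy u x y ≤ B := fun x y => (le_abs_self _).trans (hB x y)
  have hA0 : 0 ≤ A := (abs_nonneg _).trans (hA 0 0)
  have hAxx0 : 0 ≤ Axx := (abs_nonneg _).trans (hAxx 0 0)
  have hmono' : ∀ x y, 0 ≤ pdy u x y := fun x y => (hmono x y).le
  have hiy : ∀ x, Integrable (pdy u x) := fun x =>
    integrable_of_hasDerivAt_nonneg_of_tendsto (hasDerivAt_pdy hu1' x)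
      (hsec huy1.continuous x) (hmono' x) (hbot x) (htop x)
  have hIy : ∀ x, ∫ y, pdy u x y = 1 - (-1) := fun x =>
    integral_of_hasDerivAt_of_tendsto (hasDerivAt_pdy hu1' x) (hiy x) (hbot x) (htop x)
  have hle : ∀ x y, |pdx u x y * pdy u x y| ≤ A * pdy u x y := fun x y => by
    rw [abs_mul, abs_of_pos (hmono x y)]
    exact mul_le_mul_of_nonneg_right (hA x y) (hmono' x y)
  have hih : ∀ x, Integrable (fun y => pdx u x y * pdy u x y) := fun x =>
    ((hiy x).const_mul A).mono'
      ((hsec hux1.continuous x).mul (hsec huy1.continuous x)).aestronglyMeasurable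
      (ae_of_all _ (hle x))
  have hisq : ∀ x, Integrable (fun y => (pdy u x y) ^ 2) := fun x =>
    ((hiy x).const_mul B).mono' ((hsec huy1.continuous x).pow 2).aestronglyMeasurable
      (ae_of_all _ fun y => by
        rw [Real.norm_of_nonneg (sq_nonneg _)]
        nlinarith [hB' x y, hmono x y])
  have hgcont : Continuous (fun x => ∫ y, (pdy u x y) ^ 2) :=
    continuous_integral_sq huy1.continuous hmono' hB' hiy hIy
  have hux_lim : ∀ {l : Filter ℝ} {m : ℝ}, (∀ x, Tendsto (fun y => u x y) l (nhds m)) →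
      ∀ x, Tendsto (fun y => pdx u x y) l (nhds 0) := fun hl x =>
    tendsto_deriv_zero_of_tendsto_increment (f := fun y t => u t y)
      (f' := fun y t => pdx u t y) (f'' := fun y t => pdx (pdx u) t y)
      (fun y t => hasDerivAt_pdx hu1' t y) (fun y t => hasDerivAt_pdx hux1 t y)
      (fun y t => hAxx t y) fun δ _ => by simpa using (hl (x + δ)).sub (hl x)
  have huy_lim : ∀ {l : Filter ℝ} {m : ℝ}, (∀ δ : ℝ, Tendsto (fun y => y + δ) l l) →
      (∀ x, Tendsto (fun y => u x y) l (nhds m)) →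
      ∀ x, Tendsto (fun y => pdy u x y) l (nhds 0) := fun hsh hl x => by
    simpa using tendsto_deriv_zero_of_tendsto_increment (f := fun y t => u x (y + t))
      (f' := fun y t => pdy u x (y + t)) (f'' := fun y t => pdy (pdy u) x (y + t)) (a := 0)
      (fun y t => (hasDerivAt_pdy hu1' x (y + t)).comp_const_add y t)
      (fun y t => (hasDerivAt_pdy huy1 x (y + t)).comp_const_add y t)
      (fun y t => hAyy x (y + t))
      fun δ _ => by simpa using ((hl x).comp (hsh δ)).sub (hl x)
  have hFcont : Continuous F := hF3.continuous
  obtain ⟨CF, hCF⟩ : ∃ C, ∀ s ∈ Set.Icc (-1 : ℝ) 1, |F s| ≤ C :=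
    isCompact_Icc.exists_bound_of_continuousOn hFcont.continuousOn
  -- The density `E` whose `y`-derivative accounts for the conservative part of the flux.
  let E : ℝ → ℝ → ℝ := fun x y => F (u x y) - (pdy u x y) ^ 2 / 2 + (pdx u x y) ^ 2 / 2
  have hElim : ∀ {l : Filter ℝ} {m : ℝ}, (∀ δ : ℝ, Tendsto (fun y => y + δ) l l) →
      (∀ x, Tendsto (fun y => u x y) l (nhds m)) →
      ∀ x, Tendsto (E x) l (nhds (F m)) := fun hsh hl x => by
    simpa using (((hFcont.tendsto _).comp (hl x)).sub
      (((huy_lim hsh hl x).pow 2).div_const 2)).add (((hux_lim hl x).pow 2).div_const 2)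
  have hEbd : ∀ x y, |E x y| ≤ CF + B ^ 2 + A ^ 2 := fun x y => by
    have h1 := abs_le.1 (hCF (u x y) (abs_le.1 (hu1 x y)))
    have h2 := sq_le_sq' (abs_le.1 (hB x y)).1 (abs_le.1 (hB x y)).2
    have h3 := sq_le_sq' (abs_le.1 (hA x y)).1 (abs_le.1 (hA x y)).2
    have h4 := sq_nonneg (pdy u x y)
    have h5 := sq_nonneg (pdx u x y)
    exact abs_le.2 ⟨by simp only [E]; linarith, by simp only [E]; linarith⟩
  let D : ℝ → ℝ → ℝ := fun x y => pdx (pdx u) x y * pdy u x y + pdx u x y * pdy (pdx u) x y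
  have hDcont : Continuous (fun p : ℝ × ℝ => D p.1 p.2) :=
    (huxx.mul huy1.continuous).add (hux1.continuous.mul huxy)
  have hDder : ∀ x y, HasDerivAt (fun t => pdx u t y * pdy u t y) (D x y) x := fun x y => by
    have h := (hasDerivAt_pdx hux1 x y).mul (hasDerivAt_pdx huy1 x y)
    rw [pdx_pdy_comm hu2'] at h
    exact h
  have hDbd : ∀ x y, |D x y| ≤ Axx * B + A * Axy := fun x y => by
    refine (abs_add_le _ _).trans ?_
    rw [abs_mul, abs_mul]
    exact add_le_add (mul_le_mul (hAxx x y) (hB x y) (abs_nonneg _) hAxx0)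
      (mul_le_mul (hA x y) (hAxy x y) (abs_nonneg _) hA0)
  have hEder : ∀ x y, HasDerivAt (E x) (D x y + c * (pdy u x y) ^ 2) y := fun x y => by
    have h1 : HasDerivAt (fun t => F (u x t)) (deriv F (u x y) * pdy u x y) y :=
      (hF3.differentiable (by norm_num) (u x y)).hasDerivAt.comp y (hasDerivAt_pdy hu1' x y)
    have h2 := ((hasDerivAt_pdy huy1 x y).pow 2).div_const 2
    have h3 := ((hasDerivAt_pdy hux1 x y).pow 2).div_const 2
    refine ((h1.sub h2).add h3).congr_deriv ?_
    rw [← hpde x y, show pdxx u x y = pdx (pdx u) x y from rfl,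
      show pdyy u x y = pdy (pdy u) x y from rfl]
    simp only [D]
    push_cast
    ring
  have hDint : ∀ R x, ∫ y in -R..R, D x y =
      E x R - E x (-R) - c * ∫ y in -R..R, (pdy u x y) ^ 2 := fun R x => by
    have hs : IntervalIntegrable (fun y => c * (pdy u x y) ^ 2) volume (-R) R :=
      (((hsec huy1.continuous x).pow 2).const_mul c).intervalIntegrable _ _
    have hd : IntervalIntegrable (D x) volume (-R) R :=
      (hsec hDcont x).intervalIntegrable _ _
    rw [← intervalIntegral.integral_eq_sub_of_hasDerivAt (fun y _ => hEder x y) (hd.add hs),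
      intervalIntegral.integral_add hd hs, intervalIntegral.integral_const_mul]
    ring
  have hFTC : ∀ a b, ∫ x in a..b, (F 1 - c * ∫ y, (pdy u x y) ^ 2) =
      (∫ y, pdx u b y * pdy u b y) - ∫ y, pdx u a y * pdy u a y := by
    intro a b
    have htrunc : ∀ x, Tendsto (fun R : ℝ => ∫ y in -R..R, pdx u x y * pdy u x y) atTop
        (nhds (∫ y, pdx u x y * pdy u x y)) := fun x =>
      intervalIntegral_tendsto_integral (hih x) tendsto_neg_atTop_atBot tendsto_id
    have hcontD : ∀ R, Continuous fun x => ∫ y in -R..R, D x y := fun R =>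
      intervalIntegral.continuous_parametric_intervalIntegral_of_continuous' hDcont _ _
    have hR : ∀ R, ∫ x in a..b, ∫ y in -R..R, D x y =
        (∫ y in -R..R, pdx u b y * pdy u b y) - ∫ y in -R..R, pdx u a y * pdy u a y :=
      fun R => intervalIntegral.integral_eq_sub_of_hasDerivAt
        (fun x _ => hasDerivAt_intervalIntegral_of_bounded
          (f := fun x y => pdx u x y * pdy u x y)
          (Continuous.fun_mul hux1.continuous huy1.continuous) hDcont hDbd hDder _ _ x)
        ((hcontD R).intervalIntegrable _ _)
    refine tendsto_nhds_unique (f := fun R : ℝ => ∫ x in a..b, ∫ y in -R..R, D x y) ?_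
      (((htrunc b).sub (htrunc a)).congr fun R => (hR R).symm)
    refine intervalIntegral.tendsto_integral_filter_of_dominated_convergence
      (fun _ => 2 * (CF + B ^ 2 + A ^ 2) + c * (B * 2))
      (Eventually.of_forall fun R => (hcontD R).aestronglyMeasurable) ?_
      intervalIntegrable_const (ae_of_all _ fun x _ => ?_)
    · filter_upwards [eventually_ge_atTop 0] with R hR0
      refine ae_of_all _ fun x _ => ?_
      have hlo : 0 ≤ ∫ y in -R..R, (pdy u x y) ^ 2 :=
        intervalIntegral.integral_nonneg (by linarith) fun y _ => sq_nonneg _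
      have hup : ∫ y in -R..R, (pdy u x y) ^ 2 ≤ B * 2 := by
        rw [intervalIntegral.integral_of_le (by linarith)]
        calc ∫ y in Set.Ioc (-R) R, (pdy u x y) ^ 2 ≤ ∫ y, (pdy u x y) ^ 2 :=
              setIntegral_le_integral (hisq x) (ae_of_all _ fun y => sq_nonneg _)
          _ ≤ ∫ y, B * pdy u x y := integral_mono (hisq x) ((hiy x).const_mul B) fun y => by
              nlinarith [hB' x y, hmono x y]
          _ = B * 2 := by rw [integral_const_mul, hIy]; norm_num
      have h1 := abs_le.1 (hEbd x R)
      have h2 := abs_le.1 (hEbd x (-R))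
      have h3 := mul_nonneg hc.le hlo
      have h4 := mul_le_mul_of_nonneg_left hup hc.le
      rw [hDint, Real.norm_eq_abs]
      exact abs_le.2 ⟨by linarith, by linarith⟩
    · have h1 := hElim (fun δ => tendsto_atTop_add_const_right _ δ tendsto_id) htop x
      have h2 := (hElim (fun δ => tendsto_atBot_add_const_right _ δ tendsto_id) hbot x).comp
        tendsto_neg_atTop_atBot
      have h3 := (intervalIntegral_tendsto_integral (hisq x) tendsto_neg_atTop_atBot
        tendsto_id).const_mul c
      have h := (h1.sub h2).sub h3
      rw [hFm, sub_zero] at h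
      exact h.congr fun R => (hDint R x).symm
  have hcont : Continuous (fun x => F 1 - c * ∫ y, (pdy u x y) ^ 2) :=
    continuous_const.sub (hgcont.const_mul c)
  refine ⟨hih, ⟨A * 2, fun x => ?_⟩, fun x => ?_, fun a b _ => ?_⟩
  · rw [← Real.norm_eq_abs]
    calc ‖∫ y, pdx u x y * pdy u x y‖ ≤ ∫ y, A * pdy u x y :=
          norm_integral_le_of_norm_le ((hiy x).const_mul A) (ae_of_all _ (hle x))
      _ = A * 2 := by rw [integral_const_mul, hIy]; norm_num
  · refine ((hcont.integral_hasStrictDerivAt 0 x).hasDerivAt.add_const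
      (∫ y, pdx u 0 y * pdy u 0 y)).congr_of_eventuallyEq (Eventually.of_forall fun t => ?_)
    simp only [hFTC, sub_add_cancel]
  · have h := hFTC a b
    rw [intervalIntegral.integral_sub intervalIntegrable_const
      ((hgcont.const_mul c).intervalIntegrable _ _), intervalIntegral.integral_const,
      intervalIntegral.integral_const_mul, smul_eq_mul] at h
    field_simp
    linarith
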